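/- Let G be a finite closed set of sequents (labels as above) and S ∈ G. Then there is an enumeration S_1, S_2, …, S_n of the elements of [S]_G with S_1 = S such that for every k with 2 ≤ k ≤ n, the sequent S_k shares a label across sides with the previously enumerated part: v_r(S_k) ∩ v_l({S_1,…,S_{k−1}}) ≠ ∅ or v_l(S_k) ∩ v_r({S_1,…,S_{k−1}}) ≠ ∅. -/

import Mathlib

/-!
The set `K` is built up greedily from `S`. If some `H ⊂ K` contains `S` and no element of `K \ H` is
linked to `H`, then each left label of `H`, being a right label of some element of `K`, must already
be a right label of `H`, and symmetrically; so `H` is closed, against the minimality of `K`.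
-/

section GreedyEnumeration

variable {α : Type*} [DecidableEq α] {P : Finset α → α → Prop} {n : ℕ} {e : Fin (n + 1) → α}
  {a S : α} {K : Finset α}

/-- A repetition-free finite sequence in which every term but the first is related by `P` to the set
of terms preceding it. The length is `n + 1` so that there is a first term `e 0`. -/
structure IsGreedyEnumeration (P : Finset α → α → Prop) (e : Fin (n + 1) → α) : Prop where
  injective : Function.Injective e
  rel_predecessors : ∀ k ≠ 0, P ((Finset.Iio k).image e) (e k)

theorem IsGreedyEnumeration.singleton (P : Finset α → α → Prop) (S : α) :
    IsGreedyEnumeration P (n := 0) fun _ => S where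
  injective _ _ _ := (Fin.fin_one_eq_zero _).trans (Fin.fin_one_eq_zero _).symm
  rel_predecessors k hk := absurd (Fin.fin_one_eq_zero k) hk

theorem image_snoc_univ (e : Fin n → α) (a : α) :
    Finset.univ.image (Fin.snoc e a : Fin (n + 1) → α) = insert a (Finset.univ.image e) := by
  ext x
  simp [Fin.exists_fin_succ', or_comm, eq_comm]

theorem image_snoc_Iio_castSucc (e : Fin n → α) (a : α) (k : Fin n) :
    (Finset.Iio k.castSucc).image (Fin.snoc e a : Fin (n + 1) → α) = (Finset.Iio k).image e := by
  simp [← Fin.finsetImage_castSucc_Iio, Finset.image_image, Function.comp_def]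

theorem image_snoc_Iio_last (e : Fin n → α) (a : α) :
    (Finset.Iio (Fin.last n)).image (Fin.snoc e a : Fin (n + 1) → α) = Finset.univ.image e := by
  rw [Fin.Iio_last_eq_map, Finset.map_eq_image, Finset.image_image]
  simp [Function.comp_def]

theorem IsGreedyEnumeration.snoc (he : IsGreedyEnumeration P e) (ha : a ∉ Finset.univ.image e)
    (hP : P (Finset.univ.image e) a) :
    IsGreedyEnumeration P (Fin.snoc e a : Fin (n + 2) → α) where
  injective := Fin.snoc_injective_iff.2 ⟨he.injective, by simpa using ha⟩
  rel_predecessors k hk := by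
    cases k using Fin.lastCases with
    | last =>
      rw [image_snoc_Iio_last, Fin.snoc_last]
      exact hP
    | cast k =>
      rw [image_snoc_Iio_castSucc, Fin.snoc_castSucc]
      exact he.rel_predecessors k fun hk0 => hk (congrArg Fin.castSucc hk0)

theorem exists_isGreedyEnumeration (hS : S ∈ K)
    (hP : ∀ H ⊂ K, S ∈ H → ∃ a ∈ K \ H, P H a) :
    ∃ (n : ℕ) (e : Fin (n + 1) → α),
      IsGreedyEnumeration P e ∧ e 0 = S ∧ Finset.univ.image e = K := by
  let Enumerable (H : Finset α) : Prop := ∃ (n : ℕ) (e : Fin (n + 1) → α),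
    IsGreedyEnumeration P e ∧ e 0 = S ∧ Finset.univ.image e = H
  have hfin : {H | H ⊆ K ∧ Enumerable H}.Finite :=
    K.powerset.finite_toSet.subset fun H hH => Finset.mem_powerset.2 hH.1
  obtain ⟨M, ⟨hMK, n, e, he, he0, rfl⟩, hmax⟩ := hfin.exists_maximal
    ⟨{S}, Finset.singleton_subset_iff.2 hS, 0, _, .singleton P S, rfl, by simp⟩
  rcases hMK.eq_or_ssubset with hM | hM
  · exact ⟨n, e, he, he0, hM⟩
  obtain ⟨a, haK, hPa⟩ := hP _ hM (he0 ▸ Finset.mem_image_of_mem e (Finset.mem_univ 0))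
  obtain ⟨haK, haM⟩ := Finset.mem_sdiff.1 haK
  have hinsert : Enumerable (insert a (Finset.univ.image e)) :=
    ⟨n + 1, Fin.snoc e a, he.snoc haM hPa, by simpa using he0, image_snoc_univ e a⟩
  exact absurd (hmax ⟨Finset.insert_subset haK hMK, hinsert⟩ (Finset.subset_insert a _)
    (Finset.mem_insert_self a _)) haM

end GreedyEnumeration

section Linked

variable {α β : Type*} [DecidableEq β] {vl vr : α → Finset β} {H K : Finset α} {S : α}

/-- `Linked vl vr H a` says that the sequent `a` has an eigenvariable link to the set of sequents
`H`: a label of `a` on one side occurs on the other side in `H`. -/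
def Linked (vl vr : α → Finset β) (H : Finset α) (a : α) : Prop :=
  (vr a ∩ H.biUnion vl).Nonempty ∨ (vl a ∩ H.biUnion vr).Nonempty

variable [DecidableEq α]

theorem biUnion_subset_biUnion_of_forall_sdiff {f g : α → Finset β}
    (hHK : H.biUnion f ⊆ K.biUnion g) (hdisj : ∀ a ∈ K \ H, ¬(g a ∩ H.biUnion f).Nonempty) :
    H.biUnion f ⊆ H.biUnion g := by
  intro x hx
  obtain ⟨b, hbK, hxb⟩ := Finset.mem_biUnion.1 (hHK hx)
  by_contra hxH
  have hbH : b ∉ H := fun hbH => hxH (Finset.mem_biUnion.2 ⟨b, hbH, hxb⟩)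
  exact hdisj b (Finset.mem_sdiff.2 ⟨hbK, hbH⟩) ⟨x, Finset.mem_inter.2 ⟨hxb, hx⟩⟩

theorem biUnion_eq_biUnion_of_forall_not_linked (hHK : H ⊆ K)
    (hK : K.biUnion vl = K.biUnion vr) (hlink : ∀ a ∈ K \ H, ¬Linked vl vr H a) :
    H.biUnion vl = H.biUnion vr := by
  have hsub (v : α → Finset β) : H.biUnion v ⊆ K.biUnion v :=
    Finset.biUnion_subset_biUnion_of_subset_left v hHK
  exact Finset.Subset.antisymm
    (biUnion_subset_biUnion_of_forall_sdiff ((hsub vl).trans hK.subset)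
      fun a ha h => hlink a ha (.inl h))
    (biUnion_subset_biUnion_of_forall_sdiff ((hsub vr).trans hK.superset)
      fun a ha h => hlink a ha (.inr h))

theorem exists_linked_of_minimal_closed
    (hK : Minimal (fun H : Finset α => S ∈ H ∧ H.biUnion vl = H.biUnion vr) K)
    (hHK : H ⊂ K) (hS : S ∈ H) : ∃ a ∈ K \ H, Linked vl vr H a := by
  by_contra! hlink
  exact hK.not_prop_of_lt hHK
    ⟨hS, biUnion_eq_biUnion_of_forall_not_linked hHK.subset hK.prop.2 hlink⟩

end Linked

theorem stmt_6_general {α β : Type*} [DecidableEq β] {vl vr : α → Finset β} {S : α}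
    {K : Finset α}
    (hK : Minimal (fun H : Finset α => S ∈ H ∧ H.biUnion vl = H.biUnion vr) K) :
    ∃ (n : ℕ) (e : Fin n → α),
      Function.Injective e ∧ (∀ i, e i ∈ K) ∧ (∀ a ∈ K, ∃ i, e i = a) ∧
      (∃ h0 : 0 < n, e ⟨0, h0⟩ = S) ∧
      ∀ k : Fin n, 0 < (k : ℕ) →
        ((vr (e k) ∩ (Finset.univ.filter (fun i : Fin n => i < k)).biUnion
            (fun i => vl (e i))).Nonempty ∨
         (vl (e k) ∩ (Finset.univ.filter (fun i : Fin n => i < k)).biUnion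
            (fun i => vr (e i))).Nonempty) := by
  classical
  obtain ⟨n, e, he, he0, rfl⟩ := exists_isGreedyEnumeration hK.prop.1
    fun _ hHK hS => exists_linked_of_minimal_closed hK hHK hS
  refine ⟨n + 1, e, he.injective, fun i => Finset.mem_image_of_mem e (Finset.mem_univ i),
    fun a ha => by simpa using ha, ⟨n.succ_pos, he0⟩, fun k hk => ?_⟩
  have hlink : Linked vl vr ((Finset.Iio k).image e) (e k) :=
    he.rel_predecessors k (Fin.pos_iff_ne_zero.1 hk)
  simpa only [Linked, Finset.image_biUnion, Finset.filter_gt_eq_Iio] using hlink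

/-- The minimal closed sub-hypersequent [S]_G can be enumerated starting at S
so that each later sequent shares an eigenvariable label across sides with
the previously enumerated part. -/
theorem stmt_6 {α : Type*} [DecidableEq α] (G : Finset α)
    (vl vr : α → Finset ℕ)
    (hl : ∀ a ∈ G, ∀ b ∈ G, a ≠ b → Disjoint (vl a) (vl b))
    (hr : ∀ a ∈ G, ∀ b ∈ G, a ≠ b → Disjoint (vr a) (vr b))
    (hG : G.biUnion vl = G.biUnion vr)
    (S : α) (hS : S ∈ G)
    (K : Finset α) (hKsub : K ⊆ G) (hSK : S ∈ K)
    (hKc : K.biUnion vl = K.biUnion vr)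
    (hKmin : ∀ H : Finset α, H ⊆ G → S ∈ H → H.biUnion vl = H.biUnion vr → K ⊆ H) :
    ∃ (n : ℕ) (e : Fin n → α),
      Function.Injective e ∧ (∀ i, e i ∈ K) ∧ (∀ a ∈ K, ∃ i, e i = a) ∧
      (∃ h0 : 0 < n, e ⟨0, h0⟩ = S) ∧
      ∀ k : Fin n, 0 < (k : ℕ) →
        ((vr (e k) ∩ (Finset.univ.filter (fun i : Fin n => i < k)).biUnion
            (fun i => vl (e i))).Nonempty ∨
         (vl (e k) ∩ (Finset.univ.filter (fun i : Fin n => i < k)).biUnion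
            (fun i => vr (e i))).Nonempty) :=
  stmt_6_general ⟨⟨hSK, hKc⟩, fun H hH hHK => hKmin H (hHK.trans hKsub) hH.1 hH.2⟩
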